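/- For every derivable type judgement Γ ⊢ A in GSeTT, the judgement ⟦Γ⟧_B ⊢ ⟦A⟧_B is derivable in HoTT (Lemma 4.1, type part). -/

import Mathlib

/-! ### Deep embedding of the fragment of Martin-Löf type theory ("HoTT") -/

/-- HoTT variable names: `Sum.inl n` is the image of CaTT/GSeTT variable `n`,
`Sum.inr k` are extra HoTT-only names. -/
abbrev HVar : Type := ℕ ⊕ ℕ

/-- The fixed variable `B`, not the name of any CaTT/GSeTT variable. -/
def Bv : HVar := Sum.inr 0

mutual
/-- Pre-terms of HoTT. `J A u x y e P p` is the Paulin-Mohring eliminator with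
base point `u : A`, motive `P` (with bound variables `x y e`) and base case `p`. -/
inductive HTm : Type
  | var : HVar → HTm
  | refl : HTy → HTm → HTm
  | J : HTy → HTm → HVar → HVar → HVar → HTy → HTm → HTm
  | app : HTm → HTm → HTm
  | lam : HVar → HTy → HTm → HTm

/-- Pre-types of HoTT: the Tarski universe `univ`, `el`, identity types and Π-types. -/
inductive HTy : Type
  | univ : HTy
  | el : HTm → HTy
  | id : HTy → HTm → HTm → HTy
  | pi : HVar → HTy → HTy → HTy
end

/-- Pre-substitutions of HoTT (head = most recent binding). -/
abbrev HSubst := List (HVar × HTm)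
/-- Pre-contexts of HoTT (head = most recent declaration). -/
abbrev HCtx := List (HVar × HTy)

def hlookup : HSubst → HVar → HTm
  | [], x => .var x
  | (y, t) :: γ, x => if y = x then t else hlookup γ x

/-- Remove the bindings of a bound variable from a substitution. -/
def hdrop (γ : HSubst) (x : HVar) : HSubst := γ.filter (fun q => q.1 ≠ x)

mutual
/-- Action of substitutions on HoTT pre-terms. -/
def hsubTm : HTm → HSubst → HTm
  | .var x, γ => hlookup γ x
  | .refl A u, γ => .refl (hsubTy A γ) (hsubTm u γ)
  | .J A u x y e P p, γ =>
      .J (hsubTy A γ) (hsubTm u γ) x y e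
        (hsubTy P (hdrop (hdrop (hdrop γ x) y) e)) (hsubTm p γ)
  | .app f u, γ => .app (hsubTm f γ) (hsubTm u γ)
  | .lam x A u, γ => .lam x (hsubTy A γ) (hsubTm u (hdrop γ x))
/-- Action of substitutions on HoTT pre-types. -/
def hsubTy : HTy → HSubst → HTy
  | .univ, _ => .univ
  | .el a, γ => .el (hsubTm a γ)
  | .id A u v, γ => .id (hsubTy A γ) (hsubTm u γ) (hsubTm v γ)
  | .pi x A B, γ => .pi x (hsubTy A γ) (hsubTy B (hdrop γ x))
end

/-- Composition of HoTT substitutions. -/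
def hcomp (δ γ : HSubst) : HSubst := δ.map (fun p => (p.1, hsubTm p.2 γ))

/-- The identity substitution of a context. -/
def hid (Γ : HCtx) : HSubst := Γ.map (fun p => (p.1, HTm.var p.1))

def hassoc : HCtx → HVar → Option HTy
  | [], _ => none
  | (y, A) :: Γ, x => if y = x then some A else hassoc Γ x

mutual
/-- Definitional equality of HoTT pre-terms, generated by the computation rule
`J(A,u,P,p) v refl ≡ p` together with congruence rules. -/
inductive HTmEq : HTm → HTm → Prop
  | jbeta (A : HTy) (u : HTm) (x y e : HVar) (P : HTy) (p v : HTm) (B : HTy) (w : HTm) :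
      HTmEq (.app (.app (.J A u x y e P p) v) (.refl B w)) p
  | refl (u : HTm) : HTmEq u u
  | symm : HTmEq u v → HTmEq v u
  | trans : HTmEq u v → HTmEq v w → HTmEq u w
  | reflCong : HTyEq A A' → HTmEq u u' → HTmEq (.refl A u) (.refl A' u')
  | JCong : HTyEq A A' → HTmEq u u' → HTyEq P P' → HTmEq p p' →
      HTmEq (.J A u x y e P p) (.J A' u' x y e P' p')
  | appCong : HTmEq f f' → HTmEq u u' → HTmEq (.app f u) (.app f' u')
  | lamCong : HTyEq A A' → HTmEq u u' → HTmEq (.lam x A u) (.lam x A' u')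

/-- Definitional equality of HoTT pre-types. -/
inductive HTyEq : HTy → HTy → Prop
  | refl (A : HTy) : HTyEq A A
  | symm : HTyEq A B → HTyEq B A
  | trans : HTyEq A B → HTyEq B C → HTyEq A C
  | elCong : HTmEq a a' → HTyEq (.el a) (.el a')
  | idCong : HTyEq A A' → HTmEq u u' → HTmEq v v' → HTyEq (.id A u v) (.id A' u' v')
  | piCong : HTyEq A A' → HTyEq B B' → HTyEq (.pi x A B) (.pi x A' B')
end

mutual
/-- Validity of HoTT contexts: `⊢ Γ`. -/
inductive HCtxJ : HCtx → Prop
  | nil : HCtxJ []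
  | cons : HCtxJ Γ → HTyJ Γ A → HCtxJ ((x, A) :: Γ)

/-- Validity of HoTT types: `Γ ⊢ A`. -/
inductive HTyJ : HCtx → HTy → Prop
  | univ : HCtxJ Γ → HTyJ Γ .univ
  | el : HTmJ Γ a .univ → HTyJ Γ (.el a)
  | id : HTmJ Γ u A → HTmJ Γ v A → HTyJ Γ (.id A u v)
  | pi : HTyJ Γ A → HTyJ ((x, A) :: Γ) B → HTyJ Γ (.pi x A B)
  | conv : HTyJ Γ A → HTyEq A B → HTyJ Γ B

/-- Typing of HoTT terms: `Γ ⊢ u : A`. -/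
inductive HTmJ : HCtx → HTm → HTy → Prop
  | var : HCtxJ Γ → hassoc Γ x = some A → HTmJ Γ (.var x) A
  | refl : HTmJ Γ u A → HTmJ Γ (.refl A u) (.id A u u)
  | lam : HTyJ Γ A → HTmJ ((x, A) :: Γ) u B → HTmJ Γ (.lam x A u) (.pi x A B)
  | app : HTmJ Γ f (.pi x A B) → HTmJ Γ u A → HTmJ Γ (.app f u) (hsubTy B [(x, u)])
  | J : HTyJ Γ A → HTmJ Γ u A →
      HTyJ ((e, .id A (.var x) (.var y)) :: (y, A) :: (x, A) :: Γ) P →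
      HTmJ Γ p (hsubTy P [(x, u), (y, u), (e, .refl A u)]) →
      HTmJ Γ (.J A u x y e P p)
        (.pi y A (.pi e (.id A u (.var y)) (hsubTy P [(x, u)])))
  | conv : HTmJ Γ u A → HTyEq A B → HTmJ Γ u B
  | convTm : HTmJ Γ u A → HTmEq u v → HTmJ Γ v A

/-- Typing of HoTT substitutions: `Δ ⊢ γ : Γ`. -/
inductive HSubJ : HCtx → HSubst → HCtx → Prop
  | nil : HCtxJ Δ → HSubJ Δ [] []
  | cons : HSubJ Δ γ Γ → HTyJ Γ A → HTmJ Δ t (hsubTy A γ) →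
      HSubJ Δ ((x, t) :: γ) ((x, A) :: Γ)
end

mutual
/-- Iterated identity types `Idⁿ_A(u)`. -/
def idN : ℕ → HTy → HTm → HTy
  | 0, A, _ => A
  | n+1, A, u => .id (idN n A u) (reflN n A u) (reflN n A u)
/-- Iterated reflexivities `reflⁿ_{A,u}`. -/
def reflN : ℕ → HTy → HTm → HTm
  | 0, _, u => u
  | n+1, A, u => .refl (idN n A u) (reflN n A u)
end

/-- Π-lifting `Π_Γ.A`: successively bind all variables of `Γ`. -/
def piLift : HCtx → HTy → HTy
  | [], A => A
  | (x, T) :: Γ, A => piLift Γ (.pi x T A)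

/-- λ-lifting `λ_Γ.u`: successively bind all variables of `Γ`. -/
def lamLift : HCtx → HTm → HTm
  | [], u => u
  | (x, T) :: Γ, u => lamLift Γ (.lam x T u)

/-! ### The dependent type theory GSeTT -/

/-- Pre-types of GSeTT: `⋆` and `u →_A v` (terms of GSeTT are variables, i.e. `ℕ`). -/
inductive GTy : Type
  | obj : GTy
  | arr : GTy → ℕ → ℕ → GTy
deriving DecidableEq

/-- Pre-contexts of GSeTT (head = most recent declaration). -/
abbrev GCtx := List (ℕ × GTy)

def gassoc : GCtx → ℕ → Option GTy
  | [], _ => none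
  | (y, A) :: Γ, x => if y = x then some A else gassoc Γ x

mutual
/-- `⊢ Γ` in GSeTT. -/
inductive GCtxJ : GCtx → Prop
  | nil : GCtxJ []
  | cons : GCtxJ Γ → GTyJ Γ A → GCtxJ ((x, A) :: Γ)
/-- `Γ ⊢ A` in GSeTT. -/
inductive GTyJ : GCtx → GTy → Prop
  | obj : GCtxJ Γ → GTyJ Γ .obj
  | arr : GTmJ Γ u A → GTmJ Γ v A → GTyJ Γ (.arr A u v)
/-- `Γ ⊢ x : A` in GSeTT (terms are variables). -/
inductive GTmJ : GCtx → ℕ → GTy → Prop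
  | var : GCtxJ Γ → gassoc Γ x = some A → GTmJ Γ x A
end

/-- The variables declared in a GSeTT context. -/
def gvars (Γ : GCtx) : List ℕ := Γ.map Prod.fst

/-- The auxiliary judgement `Γ ⊢_ps x : A` recognising ps-contexts;
all declared variables are required to be pairwise distinct. -/
inductive GPsAux : GCtx → ℕ → GTy → Prop
  | pss (x : ℕ) : GPsAux [(x, .obj)] x .obj
  | pse : GPsAux Γ x A → y ∉ gvars Γ → f ∉ gvars Γ → f ≠ y →
      GPsAux ((f, .arr A x y) :: (y, A) :: Γ) f (.arr A x y)
  | psd : GPsAux Γ f (.arr A x y) → GPsAux Γ y A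

/-- The judgement `Γ ⊢_ps` recognising ps-contexts. -/
inductive GPs : GCtx → Prop
  | ps : GPsAux Γ x .obj → GPs Γ

/-- Dimension of a GSeTT type: `dim ⋆ = -1`, `dim (u →_A v) = dim A + 1`. -/
def gdim : GTy → ℤ
  | .obj => -1
  | .arr A _ _ => gdim A + 1

/-- Dimension of a GSeTT context: the maximal dimension of the types of its variables. -/
def gdimCtx (Γ : GCtx) : ℤ := (Γ.map (fun p => gdim p.2)).foldr max (-1)

/-- The `i`-source `∂ᵢ⁻Γ` of a ps-context. -/
def gsrc (i : ℤ) : GCtx → GCtx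
  | (f, F) :: (y, A) :: Δ =>
      if gdim A + 1 ≥ i then gsrc i Δ else (f, F) :: (y, A) :: gsrc i Δ
  | Γ => Γ

/-- The `i`-target `∂ᵢ⁺Γ` of a ps-context. -/
def gtgt (i : ℤ) : GCtx → GCtx
  | (f, F) :: (y, A) :: Δ =>
      if gdim A + 1 > i then gtgt i Δ
      else if gdim A + 1 = i then (y, A) :: (gtgt i Δ).tail
      else (f, F) :: (y, A) :: gtgt i Δ
  | Γ => Γ

/-- Translation of GSeTT types into HoTT. -/
def ginterpTy : GTy → HTy
  | .obj => .el (.var Bv)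
  | .arr A x y => .id (ginterpTy A) (.var (Sum.inl x)) (.var (Sum.inl y))

/-- Translation of GSeTT contexts into HoTT contexts (`⟦∅⟧_B = (B : Type)`). -/
def ginterpCtx : GCtx → HCtx
  | [] => [(Bv, .univ)]
  | (x, A) :: Γ => (Sum.inl x, ginterpTy A) :: ginterpCtx Γ

/-! Looking a variable up commutes with the translation, and `B`, which no GSeTT variable shadows,
keeps type `univ` in every translated context. Hence each rule of GSeTT is sent to a rule of HoTT,
by simultaneous induction on derivations of contexts, types and terms. -/

theorem hassoc_ginterpCtx_Bv (Γ : GCtx) : hassoc (ginterpCtx Γ) Bv = some .univ := by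
  induction Γ with
  | nil => simp only [ginterpCtx, hassoc, if_true]
  | cons _ _ ih => simpa only [ginterpCtx, hassoc, Bv, reduceCtorEq, if_false] using ih

theorem hassoc_ginterpCtx_inl (Γ : GCtx) (x : ℕ) :
    hassoc (ginterpCtx Γ) (Sum.inl x) = (gassoc Γ x).map ginterpTy := by
  induction Γ with
  | nil => simp only [ginterpCtx, hassoc, Bv, gassoc, reduceCtorEq, if_false, Option.map_none]
  | cons _ _ ih =>
    simp only [ginterpCtx, hassoc, gassoc, Sum.inl.injEq, ih]
    split <;> rfl

mutual

theorem GCtxJ.hCtxJ_ginterpCtx : ∀ {Γ : GCtx}, GCtxJ Γ → HCtxJ (ginterpCtx Γ)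
  | _, .nil => .cons .nil (.univ .nil)
  | _, .cons hΓ hA => .cons hΓ.hCtxJ_ginterpCtx hA.hTyJ_ginterpTy

theorem GTyJ.hTyJ_ginterpTy : ∀ {Γ : GCtx} {A : GTy},
    GTyJ Γ A → HTyJ (ginterpCtx Γ) (ginterpTy A)
  | Γ, _, .obj hΓ => .el (.var hΓ.hCtxJ_ginterpCtx (hassoc_ginterpCtx_Bv Γ))
  | _, _, .arr hu hv => .id hu.hTmJ_ginterpTy hv.hTmJ_ginterpTy

theorem GTmJ.hTmJ_ginterpTy : ∀ {Γ : GCtx} {x : ℕ} {A : GTy},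
    GTmJ Γ x A → HTmJ (ginterpCtx Γ) (.var (Sum.inl x)) (ginterpTy A)
  | Γ, x, A, .var hΓ hx =>
    have hassoc_x : hassoc (ginterpCtx Γ) (Sum.inl x) = some (ginterpTy A) := by
      rw [hassoc_ginterpCtx_inl, hx, Option.map_some]
    .var hΓ.hCtxJ_ginterpCtx hassoc_x

end

/-- Lemma 4.1, type part. -/
theorem stmt8 (Γ : GCtx) (A : GTy) (h : GTyJ Γ A) :
    HTyJ (ginterpCtx Γ) (ginterpTy A) :=
  h.hTyJ_ginterpTy
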